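/- Fix positive real numbers ℓ12, ℓ13, ℓ14, ℓ23, ℓ24, and for t > 0 let E(t) be the 4 × 4 symmetric matrix with unit diagonal, entries cosh(ℓ_{ij}) for the pairs (1,2), (1,3), (1,4), (2,3), (2,4), and (3,4)-entry cosh t. Let c_{ij}(t) denote the cofactors of E(t) and Δ(t) = det E(t). Suppose at a point t > 0 that Δ(t) < 0, c_{11}(t) > 0 and c_{22}(t) > 0. Then the function θ34 : s ↦ arccos(−c_{12}(s)/√(c_{11}(s)·c_{22}(s))) is differentiable at t with derivative θ34'(t) = [ c_{14}(t)·(c_{11}(t)·c_{23}(t) − c_{12}(t)·c_{13}(t))/c_{11}(t) + c_{24}(t)·(c_{13}(t)·c_{22}(t) − c_{12}(t)·c_{23}(t))/c_{22}(t) ] / (−Δ(t))^{3/2}. -/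

import Mathlib

/-!
Write `u = c₁₁`, `v = c₂₂`, `w = c₁₂` and let `E` be the edge matrix, with `Δ = det E`. Jacobi's
identity for complementary minors gives `u v - w² = Δ (1 - cosh² t) = -Δ sinh² t`
(`cofT_jacobi`), which is positive, so the argument of `arccos` stays in `(-1, 1)` and
`√(1 - cos² θ) = √(-Δ) sinh t / √(u v)`. Hence (`hasDerivAt_arccos_div_sqrt`)
`θ' = (w' - w u' / (2 u) - w v' / (2 v)) / (√(-Δ) sinh t)`.

Each cofactor depends on `t` only through `x = cosh t`, so its derivative is `sinh t` times its
slope in `x`, and the factor `sinh t` cancels. Multiplied by `Δ`, these slopes are quadratic in the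
cofactors: `Δ ∂ₓc₁₁ = 2 (c₁₁ c₃₄ - c₁₃ c₁₄)`, `Δ ∂ₓc₂₂ = 2 (c₂₂ c₃₄ - c₂₃ c₂₄)` and
`Δ ∂ₓc₁₂ = 2 c₁₂ c₃₄ - c₁₃ c₂₄ - c₁₄ c₂₃` (the lemmas `det_mul_slope_*`). Substituting them, the
terms in `c₃₄` cancel and the stated formula remains.

Subscripts in comments are 1-based, as in `c₁₂`, whereas Lean indices are 0-based.
-/

open Real

/-- The edge matrix with varying sixth edge length: the 4 × 4 symmetric matrix with
unit diagonal, entries `cosh ℓᵢⱼ` for the pairs `(1,2), (1,3), (1,4), (2,3), (2,4)`,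
and `(3,4)`-entry `cosh t`. -/
noncomputable def edgeMatrixT (l12 l13 l14 l23 l24 : ℝ) (t : ℝ) :
    Matrix (Fin 4) (Fin 4) ℝ :=
  !![1, cosh l12, cosh l13, cosh l14;
     cosh l12, 1, cosh l23, cosh l24;
     cosh l13, cosh l23, 1, cosh t;
     cosh l14, cosh l24, cosh t, 1]

/-- The `(i,j)`-cofactor of `edgeMatrixT … t` (0-based indices), as a function of `t`. -/
noncomputable def cofT (l12 l13 l14 l23 l24 : ℝ) (i j : Fin 4) (t : ℝ) : ℝ :=
  (-1 : ℝ) ^ (i.val + j.val) *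
    ((edgeMatrixT l12 l13 l14 l23 l24 t).submatrix i.succAbove j.succAbove).det

theorem cofT_00 (l12 l13 l14 l23 l24 t : ℝ) :
    cofT l12 l13 l14 l23 l24 0 0 t =
      (1 - cosh t * cosh t - cosh l23 * cosh l23 + cosh l23 * cosh t * cosh l24 +
      cosh l24 * cosh l23 * cosh t - cosh l24 * cosh l24) := by
  simp [cofT, edgeMatrixT, Matrix.det_fin_three]

theorem cofT_01 (l12 l13 l14 l23 l24 t : ℝ) :
    cofT l12 l13 l14 l23 l24 0 1 t =
      -(cosh l12 - cosh l12 * cosh t * cosh t - cosh l23 * cosh l13 + cosh l23 * cosh t * cosh l14 +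
      cosh l24 * cosh l13 * cosh t - cosh l24 * cosh l14) := by
  simp [cofT, edgeMatrixT, Matrix.det_fin_three, Fin.succAbove]

theorem cofT_02 (l12 l13 l14 l23 l24 t : ℝ) :
    cofT l12 l13 l14 l23 l24 0 2 t =
      (cosh l12 * cosh l23 - cosh l12 * cosh t * cosh l24 - cosh l13 + cosh t * cosh l14 +
      cosh l24 * cosh l13 * cosh l24 - cosh l24 * cosh l23 * cosh l14) := by
  simp [cofT, edgeMatrixT, Matrix.det_fin_three, Fin.succAbove]

theorem cofT_03 (l12 l13 l14 l23 l24 t : ℝ) :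
    cofT l12 l13 l14 l23 l24 0 3 t =
      -(cosh l12 * cosh l23 * cosh t - cosh l12 * cosh l24 - cosh l13 * cosh t + cosh l14 +
      cosh l23 * cosh l13 * cosh l24 - cosh l23 * cosh l23 * cosh l14) := by
  simp [cofT, edgeMatrixT, Matrix.det_fin_three, Fin.succAbove]
  ring

theorem cofT_11 (l12 l13 l14 l23 l24 t : ℝ) :
    cofT l12 l13 l14 l23 l24 1 1 t =
      (1 - cosh t * cosh t - cosh l13 * cosh l13 + cosh l13 * cosh t * cosh l14 +
      cosh l14 * cosh l13 * cosh t - cosh l14 * cosh l14) := by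
  simp [cofT, edgeMatrixT, Matrix.det_fin_three, Fin.succAbove]

theorem cofT_12 (l12 l13 l14 l23 l24 t : ℝ) :
    cofT l12 l13 l14 l23 l24 1 2 t =
      -(cosh l23 - cosh t * cosh l24 - cosh l12 * cosh l13 + cosh l12 * cosh t * cosh l14 +
      cosh l14 * cosh l13 * cosh l24 - cosh l14 * cosh l23 * cosh l14) := by
  simp [cofT, edgeMatrixT, Matrix.det_fin_three, Fin.succAbove]
  ring

theorem cofT_13 (l12 l13 l14 l23 l24 t : ℝ) :
    cofT l12 l13 l14 l23 l24 1 3 t =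
      (cosh l23 * cosh t - cosh l24 - cosh l12 * cosh l13 * cosh t + cosh l12 * cosh l14 +
      cosh l13 * cosh l13 * cosh l24 - cosh l13 * cosh l23 * cosh l14) := by
  simp [cofT, edgeMatrixT, Matrix.det_fin_three, Fin.succAbove]
  ring

theorem cofT_23 (l12 l13 l14 l23 l24 t : ℝ) :
    cofT l12 l13 l14 l23 l24 2 3 t =
      -(cosh t - cosh l23 * cosh l24 - cosh l12 * cosh l12 * cosh t + cosh l12 * cosh l23 * cosh l14 +
      cosh l13 * cosh l12 * cosh l24 - cosh l13 * cosh l14) := by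
  simp [cofT, edgeMatrixT, Matrix.det_fin_three, Fin.succAbove]
  ring

/-- Laplace expansion along the first row. -/
theorem det_edgeMatrixT (l12 l13 l14 l23 l24 t : ℝ) :
    (edgeMatrixT l12 l13 l14 l23 l24 t).det =
      cofT l12 l13 l14 l23 l24 0 0 t + cosh l12 * cofT l12 l13 l14 l23 l24 0 1 t +
      cosh l13 * cofT l12 l13 l14 l23 l24 0 2 t + cosh l14 * cofT l12 l13 l14 l23 l24 0 3 t := by
  rw [Matrix.det_succ_row_zero, Fin.sum_univ_four]
  simp [edgeMatrixT, cofT]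
  ring

/-- Jacobi's identity for the complementary principal minor `1 - cosh² t = -sinh² t`. -/
theorem cofT_jacobi (l12 l13 l14 l23 l24 t : ℝ) :
    cofT l12 l13 l14 l23 l24 0 0 t * cofT l12 l13 l14 l23 l24 1 1 t - cofT l12 l13 l14 l23 l24 0 1 t ^ 2 =
      -(edgeMatrixT l12 l13 l14 l23 l24 t).det * sinh t ^ 2 := by
  rw [Real.sinh_sq]
  simp only [det_edgeMatrixT, cofT_00, cofT_01, cofT_02, cofT_03, cofT_11]
  ring

/-- The slope `∂ₓc₁₁` in the entry `x = cosh t` is twice, up to sign, the minor of the edge matrix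
on rows `2, 4` and columns `2, 3`; Jacobi's identity expresses `Δ` times that minor by cofactors. -/
theorem det_mul_slope_00 (l12 l13 l14 l23 l24 t : ℝ) :
    (edgeMatrixT l12 l13 l14 l23 l24 t).det * (2 * (cosh l23 * cosh l24 - cosh t)) =
      2 * (cofT l12 l13 l14 l23 l24 0 0 t * cofT l12 l13 l14 l23 l24 2 3 t -
        cofT l12 l13 l14 l23 l24 0 2 t * cofT l12 l13 l14 l23 l24 0 3 t) := by
  simp only [det_edgeMatrixT, cofT_00, cofT_01, cofT_02, cofT_03, cofT_23]
  ring

/-- The analogue of `det_mul_slope_00` for `c₂₂`. -/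
theorem det_mul_slope_11 (l12 l13 l14 l23 l24 t : ℝ) :
    (edgeMatrixT l12 l13 l14 l23 l24 t).det * (2 * (cosh l13 * cosh l14 - cosh t)) =
      2 * (cofT l12 l13 l14 l23 l24 1 1 t * cofT l12 l13 l14 l23 l24 2 3 t -
        cofT l12 l13 l14 l23 l24 1 2 t * cofT l12 l13 l14 l23 l24 1 3 t) := by
  simp only [det_edgeMatrixT, cofT_00, cofT_01, cofT_02, cofT_03, cofT_11, cofT_12, cofT_13, cofT_23]
  ring

/-- `Δ` times the slope of `c₁₂` in the entry `x = cosh t`, as given by differentiating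
`adj E = Δ • E⁻¹`:
`Δ ∂ₓ(adj E) = tr(adj E · ∂ₓE) adj E - adj E · ∂ₓE · adj E`. -/
theorem det_mul_slope_01 (l12 l13 l14 l23 l24 t : ℝ) :
    (edgeMatrixT l12 l13 l14 l23 l24 t).det * (2 * cosh l12 * cosh t - cosh l23 * cosh l14 - cosh l13 * cosh l24) =
      2 * cofT l12 l13 l14 l23 l24 0 1 t * cofT l12 l13 l14 l23 l24 2 3 t -
        cofT l12 l13 l14 l23 l24 0 2 t * cofT l12 l13 l14 l23 l24 1 3 t -
        cofT l12 l13 l14 l23 l24 0 3 t * cofT l12 l13 l14 l23 l24 1 2 t := by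
  simp only [det_edgeMatrixT, cofT_00, cofT_01, cofT_02, cofT_03, cofT_12, cofT_13, cofT_23]
  ring

theorem hasDerivAt_quadratic_cosh (p q r t : ℝ) :
    HasDerivAt (fun s => p + q * cosh s + r * cosh s ^ 2)
      ((q + 2 * r * cosh t) * sinh t) t := by
  have hc := Real.hasDerivAt_cosh t
  refine (((hc.const_mul q).const_add p).add ((hc.pow 2).const_mul r)).congr_deriv ?_
  norm_num
  ring

theorem hasDerivAt_cofT_00 (l12 l13 l14 l23 l24 t : ℝ) :
    HasDerivAt (cofT l12 l13 l14 l23 l24 0 0)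
      (2 * (cosh l23 * cosh l24 - cosh t) * sinh t) t := by
  have h := hasDerivAt_quadratic_cosh (1 - cosh l23 ^ 2 - cosh l24 ^ 2)
    (2 * cosh l23 * cosh l24) (-1) t
  refine (h.congr_deriv (by ring)).congr_of_eventuallyEq (.of_forall fun s => ?_)
  simp only [cofT_00]
  ring

theorem hasDerivAt_cofT_11 (l12 l13 l14 l23 l24 t : ℝ) :
    HasDerivAt (cofT l12 l13 l14 l23 l24 1 1)
      (2 * (cosh l13 * cosh l14 - cosh t) * sinh t) t := by
  have h := hasDerivAt_quadratic_cosh (1 - cosh l13 ^ 2 - cosh l14 ^ 2)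
    (2 * cosh l13 * cosh l14) (-1) t
  refine (h.congr_deriv (by ring)).congr_of_eventuallyEq (.of_forall fun s => ?_)
  simp only [cofT_11]
  ring

theorem hasDerivAt_cofT_01 (l12 l13 l14 l23 l24 t : ℝ) :
    HasDerivAt (cofT l12 l13 l14 l23 l24 0 1)
      ((2 * cosh l12 * cosh t - cosh l23 * cosh l14 - cosh l13 * cosh l24) * sinh t) t := by
  have h := hasDerivAt_quadratic_cosh (cosh l13 * cosh l23 + cosh l14 * cosh l24 - cosh l12)
    (-(cosh l23 * cosh l14 + cosh l13 * cosh l24)) (cosh l12) t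
  refine (h.congr_deriv (by ring)).congr_of_eventuallyEq (.of_forall fun s => ?_)
  simp only [cofT_01]
  ring

/-- Differentiating `arccos (-w / √(u v))` when `u v - w² = D S²` with `S > 0`: the last relation
turns `√(1 - w² / (u v))` into `√D · S / √(u v)`. -/
theorem hasDerivAt_arccos_div_sqrt {u v w : ℝ → ℝ} {u' v' w' D S t : ℝ}
    (hu : HasDerivAt u u' t) (hv : HasDerivAt v v' t) (hw : HasDerivAt w w' t)
    (hu0 : 0 < u t) (hv0 : 0 < v t) (hD : 0 < D) (hS : 0 < S)
    (h : u t * v t - w t ^ 2 = D * S ^ 2) :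
    HasDerivAt (fun s => Real.arccos (-(w s) / √(u s * v s)))
      ((w' - w t * u' / (2 * u t) - w t * v' / (2 * v t)) / (√D * S)) t := by
  have huv : 0 < u t * v t := mul_pos hu0 hv0
  have hP : 0 < √(u t * v t) := Real.sqrt_pos.2 huv
  have hP2 : √(u t * v t) ^ 2 = u t * v t := Real.sq_sqrt huv.le
  have hR : 0 < √D := Real.sqrt_pos.2 hD
  have hDS : 0 < D * S ^ 2 := by positivity
  have hone : 1 - (-(w t) / √(u t * v t)) ^ 2 = (√D * S / √(u t * v t)) ^ 2 := by
    rw [div_pow, div_pow, hP2, mul_pow, Real.sq_sqrt hD.le, ← h]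
    field_simp
  have hlt : (-(w t) / √(u t * v t)) ^ 2 < 1 := by
    have : 0 < (√D * S / √(u t * v t)) ^ 2 := by positivity
    linarith
  have hroot : √(1 - (-(w t) / √(u t * v t)) ^ 2) = √D * S / √(u t * v t) := by
    rw [hone, Real.sqrt_sq (by positivity)]
  have hne1 : -(w t) / √(u t * v t) ≠ -1 := by
    intro h1; rw [h1] at hlt; norm_num at hlt
  have hne2 : -(w t) / √(u t * v t) ≠ 1 := by
    intro h1; rw [h1] at hlt; norm_num at hlt
  have hquot := hw.neg.div ((hu.mul hv).sqrt huv.ne') hP.ne'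
  refine ((Real.hasDerivAt_arccos hne1 hne2).comp t hquot).congr_deriv ?_
  simp only [Pi.neg_apply, Pi.mul_apply]
  rw [hroot, hP2]
  field_simp
  rw [hP2]
  field_simp
  ring

/-- The derivative of the dihedral angle `θ₃₄ = arccos(−c₁₂(t)/√(c₁₁(t)·c₂₂(t)))`
with respect to the varying edge length `ℓ₃₄ = t` is
`[c₁₄(c₁₁c₂₃ − c₁₂c₁₃)/c₁₁ + c₂₄(c₁₃c₂₂ − c₁₂c₂₃)/c₂₂] / (−Δ)^{3/2}`. -/
theorem deriv_theta34 (l12 l13 l14 l23 l24 : ℝ)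
    (h12 : 0 < l12) (h13 : 0 < l13) (h14 : 0 < l14)
    (h23 : 0 < l23) (h24 : 0 < l24) (t : ℝ) (ht : 0 < t)
    (hΔ : (edgeMatrixT l12 l13 l14 l23 l24 t).det < 0)
    (hc11 : 0 < cofT l12 l13 l14 l23 l24 0 0 t)
    (hc22 : 0 < cofT l12 l13 l14 l23 l24 1 1 t) :
    HasDerivAt
      (fun s => Real.arccos (-(cofT l12 l13 l14 l23 l24 0 1 s) /
        Real.sqrt (cofT l12 l13 l14 l23 l24 0 0 s * cofT l12 l13 l14 l23 l24 1 1 s)))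
      ((cofT l12 l13 l14 l23 l24 0 3 t *
          (cofT l12 l13 l14 l23 l24 0 0 t * cofT l12 l13 l14 l23 l24 1 2 t -
            cofT l12 l13 l14 l23 l24 0 1 t * cofT l12 l13 l14 l23 l24 0 2 t) /
          cofT l12 l13 l14 l23 l24 0 0 t +
        cofT l12 l13 l14 l23 l24 1 3 t *
          (cofT l12 l13 l14 l23 l24 0 2 t * cofT l12 l13 l14 l23 l24 1 1 t -
            cofT l12 l13 l14 l23 l24 0 1 t * cofT l12 l13 l14 l23 l24 1 2 t) /
          cofT l12 l13 l14 l23 l24 1 1 t) /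
        Real.sqrt ((-(edgeMatrixT l12 l13 l14 l23 l24 t).det) ^ 3)) t := by
  have hJ := cofT_jacobi l12 l13 l14 l23 l24 t
  have e00 := det_mul_slope_00 l12 l13 l14 l23 l24 t
  have e11 := det_mul_slope_11 l12 l13 l14 l23 l24 t
  have e01 := det_mul_slope_01 l12 l13 l14 l23 l24 t
  refine hasDerivAt_arccos_div_sqrt (hasDerivAt_cofT_00 l12 l13 l14 l23 l24 t)
    (hasDerivAt_cofT_11 l12 l13 l14 l23 l24 t) (hasDerivAt_cofT_01 l12 l13 l14 l23 l24 t)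
    hc11 hc22 (neg_pos.2 hΔ) (Real.sinh_pos_iff.2 ht) hJ |>.congr_deriv ?_
  generalize (edgeMatrixT l12 l13 l14 l23 l24 t).det = Δ at *
  have hS : 0 < sinh t := Real.sinh_pos_iff.2 ht
  have hR : 0 < √(-Δ) := Real.sqrt_pos.2 (neg_pos.2 hΔ)
  have hR3 : √((-Δ) ^ 3) = -Δ * √(-Δ) := by
    rw [show (-Δ) ^ 3 = (-Δ) ^ 2 * -Δ by ring, Real.sqrt_mul (sq_nonneg _),
      Real.sqrt_sq (neg_pos.2 hΔ).le]
  rw [hR3]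
  have hΔ0 : Δ ≠ 0 := hΔ.ne
  have hc11' := hc11.ne'
  have hc22' := hc22.ne'
  rw [div_eq_div_iff (by positivity) (mul_ne_zero (neg_ne_zero.2 hΔ0) hR.ne')]
  -- The coefficients substitute the three slope identities; the `c₃₄` terms then cancel.
  linear_combination (norm := skip) √(-Δ) * sinh t * (-e01 +
    cofT l12 l13 l14 l23 l24 0 1 t / (2 * cofT l12 l13 l14 l23 l24 0 0 t) * e00 +
    cofT l12 l13 l14 l23 l24 0 1 t / (2 * cofT l12 l13 l14 l23 l24 1 1 t) * e11)
  field_simp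
  ring
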